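/- For every integer $p \geq 1$, the sum formula $\zeta(p+1) = \zeta(2,\underbrace{1,\ldots,1}_{p-1})$ holds, i.e. $\sum_{m=1}^\infty \frac{1}{m^{p+1}} = \sum_{s_p > s_{p-1} > \cdots > s_1 > 0} \frac{1}{s_p^2\, s_{p-1}\cdots s_1}$. -/

import Mathlib

open Filter Topology

namespace ZetaSumFormula

/-- The connector `m! n! / (m + n)!`. -/
noncomputable def connector (m n : ℕ) : ℝ := ((m + n).choose n : ℝ)⁻¹

lemma connector_nonneg (m n : ℕ) : 0 ≤ connector m n := by
  unfold connector; positivity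

lemma connector_comm (m n : ℕ) : connector m n = connector n m := by
  unfold connector
  rw [add_comm n m, Nat.choose_symm_add]

lemma connector_zero_left (n : ℕ) : connector 0 n = 1 := by
  simp [connector]

lemma connector_telescope (m n : ℕ) :
    1 / ((m + 1 : ℕ) : ℝ) * connector (m + 1) (n + 1) =
      1 / ((n + 1 : ℕ) : ℝ) * (connector m (n + 1) - connector (m + 1) (n + 1)) := by
  have h : ((m + 1 + (n + 1)).choose (n + 1) : ℝ) * (m + 1) =
      (m + (n + 1)).choose (n + 1) * (m + n + 2) := by
    have := Nat.choose_mul_succ_eq (m + (n + 1)) (n + 1)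
    rw [show m + (n + 1) + 1 - (n + 1) = m + 1 by omega,
      show m + (n + 1) + 1 = m + 1 + (n + 1) by omega] at this
    have := congrArg (Nat.cast (R := ℝ)) this
    push_cast at this
    linarith
  have hpos : (0 : ℝ) < (m + (n + 1)).choose (n + 1) :=
    Nat.cast_pos.2 (Nat.choose_pos (by omega))
  have hpos' : (0 : ℝ) < (m + 1 + (n + 1)).choose (n + 1) :=
    Nat.cast_pos.2 (Nat.choose_pos (by omega))
  unfold connector
  push_cast
  field_simp
  linarith

lemma succ_le_choose (m n : ℕ) : m + 1 ≤ (m + (n + 1)).choose (n + 1) := by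
  induction m with
  | zero => simp
  | succ m ih =>
    have h : 0 < (m + (n + 1)).choose n := Nat.choose_pos (by omega)
    rw [show m + 1 + (n + 1) = m + (n + 1) + 1 by omega, Nat.choose_succ_succ']
    omega

lemma tendsto_connector (n : ℕ) : Tendsto (fun m ↦ connector m (n + 1)) atTop (𝓝 0) := by
  refine squeeze_zero (fun m ↦ connector_nonneg _ _) (fun m ↦ ?_)
    tendsto_one_div_add_atTop_nhds_zero_nat
  rw [connector, one_div]
  exact inv_anti₀ (by positivity) (by exact_mod_cast succ_le_choose m n)

/-- The transport relation `∑_{a > m} a⁻¹ C(a, n) = n⁻¹ C(m, n)`, indexed by `a = m + 1 + k`. -/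
lemma hasSum_connector_add (m n : ℕ) :
    HasSum (fun k : ℕ ↦ 1 / ((k + (m + 1) : ℕ) : ℝ) * connector (k + (m + 1)) (n + 1))
      (1 / ((n + 1 : ℕ) : ℝ) * connector m (n + 1)) := by
  rw [hasSum_iff_tendsto_nat_of_nonneg
    (fun k ↦ mul_nonneg (by positivity) (connector_nonneg _ _))]
  have hsum (N : ℕ) : ∑ k ∈ Finset.range N,
      1 / ((k + (m + 1) : ℕ) : ℝ) * connector (k + (m + 1)) (n + 1) =
      1 / ((n + 1 : ℕ) : ℝ) * (connector m (n + 1) - connector (N + m) (n + 1)) := by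
    induction N with
    | zero => simp
    | succ N ih =>
      rw [Finset.sum_range_succ, ih, ← add_assoc, connector_telescope,
        show N + 1 + m = N + m + 1 by omega]
      ring
  simp_rw [hsum]
  simpa using ((tendsto_connector n).comp (tendsto_add_atTop_nat m)).const_sub
    (connector m (n + 1)) |>.const_mul (1 / ((n + 1 : ℕ) : ℝ))

lemma tsum_connector (m n : ℕ) :
    ∑' a : ℕ, (if m < a then ENNReal.ofReal (1 / (a : ℝ) * connector a (n + 1)) else 0) =
      ENNReal.ofReal (1 / ((n + 1 : ℕ) : ℝ) * connector m (n + 1)) := by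
  rw [← Summable.sum_add_tsum_nat_add' (k := m + 1) ENNReal.summable, Finset.sum_eq_zero, zero_add,
    ← (hasSum_connector_add m n).tsum_eq, ENNReal.ofReal_tsum_of_nonneg
      (fun k ↦ mul_nonneg (by positivity) (connector_nonneg _ _))
      (hasSum_connector_add m n).summable]
  · exact tsum_congr fun k ↦ if_pos (by omega)
  · intro a ha
    rw [Finset.mem_range] at ha
    exact if_neg (by omega)

/-- The last entry of a tuple, with value `0` on the empty tuple. -/
def top : {p : ℕ} → (Fin p → ℕ) → ℕ
  | 0, _ => 0
  | p + 1, s => s (Fin.last p)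

/-- Strictly increasing tuples of positive integers. -/
def IsIndex {p : ℕ} (s : Fin p → ℕ) : Prop := StrictMono s ∧ ∀ i, 0 < s i

lemma isIndex_snoc {p : ℕ} (t : Fin p → ℕ) (a : ℕ) :
    IsIndex (Fin.snoc t a : Fin (p + 1) → ℕ) ↔ IsIndex t ∧ top t < a := by
  cases p with
  | zero =>
    simp [IsIndex, top, Subsingleton.strictMono, Fin.snoc]
  | succ p =>
    have hmono : StrictMono (Fin.snoc t a : Fin (p + 2) → ℕ) ↔
        StrictMono t ∧ t (Fin.last p) < a := by
      rw [Fin.strictMono_iff_lt_succ, Fin.strictMono_iff_lt_succ, Fin.forall_fin_succ']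
      refine and_congr (forall_congr' fun i ↦ ?_) ?_
      · rw [Fin.succ_castSucc, Fin.snoc_castSucc, Fin.snoc_castSucc]
      · rw [Fin.succ_last, Fin.snoc_castSucc, Fin.snoc_last]
    rw [IsIndex, hmono, Fin.forall_fin_succ']
    simp only [Fin.snoc_castSucc, Fin.snoc_last, IsIndex, top]
    constructor
    · rintro ⟨⟨h1, h2⟩, h3, -⟩
      exact ⟨⟨h1, h3⟩, h2⟩
    · rintro ⟨⟨h1, h3⟩, h2⟩
      exact ⟨⟨h1, h2⟩, h3, (Nat.zero_le _).trans_lt h2⟩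

open Classical in
/-- The weight `∏ i, 1 / s i` of a strictly increasing positive tuple, and `0` on other tuples. -/
noncomputable def weight {p : ℕ} (s : Fin p → ℕ) : ENNReal :=
  if IsIndex s then ENNReal.ofReal (∏ i, (1 : ℝ) / (s i : ℝ)) else 0

lemma weight_snoc {p : ℕ} (t : Fin p → ℕ) (a : ℕ) :
    weight (Fin.snoc t a : Fin (p + 1) → ℕ) =
      weight t * if top t < a then ENNReal.ofReal (1 / (a : ℝ)) else 0 := by
  unfold weight
  rw [isIndex_snoc, Fin.prod_univ_castSucc]
  simp only [Fin.snoc_castSucc, Fin.snoc_last]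
  rw [ENNReal.ofReal_mul (Finset.prod_nonneg fun i _ ↦ by positivity)]
  by_cases h1 : IsIndex t <;> by_cases h2 : top t < a <;> simp [h1, h2]

lemma tsum_weight_mul_connector (p n : ℕ) :
    ∑' s : Fin p → ℕ, weight s * ENNReal.ofReal (connector (top s) (n + 1)) =
      ENNReal.ofReal (1 / ((n + 1 : ℕ) : ℝ)) ^ p := by
  induction p with
  | zero =>
    simp [top, connector_zero_left, weight, IsIndex, Subsingleton.strictMono]
  | succ p ih =>
    rw [← (Fin.snocEquiv fun _ : Fin (p + 1) ↦ ℕ).tsum_eq, ENNReal.tsum_prod', ENNReal.tsum_comm,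
      pow_succ, ← ih, ← ENNReal.tsum_mul_right]
    refine tsum_congr fun t ↦ ?_
    rw [mul_assoc, ← ENNReal.ofReal_mul (connector_nonneg _ _), mul_comm (connector _ _),
      ← tsum_connector, ← ENNReal.tsum_mul_left]
    refine tsum_congr fun a ↦ ?_
    change weight (Fin.snoc t a : Fin (p + 1) → ℕ) *
      ENNReal.ofReal (connector ((Fin.snoc t a : Fin (p + 1) → ℕ) (Fin.last p)) (n + 1)) = _
    rw [weight_snoc, Fin.snoc_last, mul_assoc]
    congr 1
    split_ifs
    · rw [ENNReal.ofReal_mul (by positivity)]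
    · rw [zero_mul]

lemma tsum_inv_mul_connector {m : ℕ} (hm : 0 < m) :
    ∑' n : ℕ, ENNReal.ofReal (1 / ((n + 1 : ℕ) : ℝ)) * ENNReal.ofReal (connector m (n + 1)) =
      ENNReal.ofReal (1 / (m : ℝ)) := by
  obtain ⟨m, rfl⟩ := Nat.exists_eq_succ_of_ne_zero hm.ne'
  have h := hasSum_connector_add 0 m
  rw [connector_zero_left, mul_one] at h
  rw [Nat.succ_eq_add_one, ← h.tsum_eq, ENNReal.ofReal_tsum_of_nonneg
    (fun k ↦ mul_nonneg (by positivity) (connector_nonneg _ _)) h.summable]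
  refine tsum_congr fun n ↦ ?_
  rw [zero_add, connector_comm (n + 1), ENNReal.ofReal_mul (by positivity)]

lemma tsum_zeta_eq_tsum_weight (p : ℕ) :
    ∑' m : ℕ, ENNReal.ofReal (1 / ((m + 1 : ℕ) : ℝ)) ^ (p + 2) =
      ∑' s : Fin (p + 1) → ℕ, weight s * ENNReal.ofReal (1 / (s (Fin.last p) : ℝ)) := by
  simp_rw [pow_succ' _ (p + 1), ← tsum_weight_mul_connector, ← ENNReal.tsum_mul_left]
  rw [ENNReal.tsum_comm]
  refine tsum_congr fun s ↦ ?_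
  simp_rw [mul_left_comm _ (weight s), ENNReal.tsum_mul_left]
  by_cases hs : IsIndex s
  · rw [tsum_inv_mul_connector (m := top s) (hs.2 _)]
    rfl
  · simp [weight, hs]

end ZetaSumFormula

open ZetaSumFormula in
/-- The sum formula `ζ(p+1) = ζ(2,1,…,1)` (with `p-1` ones). -/
theorem zeta_sum_formula (p : ℕ) (hp : 1 ≤ p) :
    ∑' m : ℕ, (1 : ℝ) / ((m + 1 : ℕ) : ℝ) ^ (p + 1) =
      ∑' s : {s : Fin p → ℕ // StrictMono s ∧ ∀ i, 0 < s i},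
        (1 / ((s.1 ⟨p - 1, by omega⟩ : ℕ) : ℝ)) * ∏ i : Fin p, (1 : ℝ) / (s.1 i : ℝ) := by
  obtain ⟨p, rfl⟩ := Nat.exists_eq_succ_of_ne_zero (Nat.one_le_iff_ne_zero.1 hp)
  have h := congrArg ENNReal.toReal (tsum_zeta_eq_tsum_weight p)
  have hsupp : Function.support (fun s : Fin (p + 1) → ℕ ↦
      weight s * ENNReal.ofReal (1 / (s (Fin.last p) : ℝ))) ⊆
      {s | StrictMono s ∧ ∀ i, 0 < s i} := by
    intro s hs
    by_contra hs'
    exact hs (by simp [weight, show ¬ IsIndex s from hs'])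
  rw [← tsum_subtype_eq_of_support_subset hsupp, ENNReal.tsum_toReal_eq (by finiteness),
    ENNReal.tsum_toReal_eq] at h
  · convert h using 1
    · refine tsum_congr fun m ↦ ?_
      rw [ENNReal.toReal_pow, ENNReal.toReal_ofReal (by positivity), one_div_pow]
    · refine tsum_congr fun s ↦ ?_
      rw [weight, if_pos (show IsIndex s.1 from s.2), ENNReal.toReal_mul,
        ENNReal.toReal_ofReal (Finset.prod_nonneg fun i _ ↦ by positivity),
        ENNReal.toReal_ofReal (by positivity), mul_comm]
      rfl
  · intro s
    rw [weight, if_pos (show IsIndex s.1 from s.2)]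
    finiteness
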